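/- For every real θ with 0 < θ < 2π, the identity Cl₂(θ)/θ = 1 - log θ + ∑_{n=1}^∞ ζ(2n)/(n(2n+1)) · (θ/(2π))^{2n} holds, where Cl₂(θ) = ∑_{k=1}^∞ sin(kθ)/k² is the Clausen function. -/

import Mathlib

open Real
open Filter Topology

/-- log sine expansion -/
lemma logsin (x : ℝ) (h0 : 0 < x) (h1 : x < 1) :
    HasSum (fun j : ℕ => -Real.log (1 - x^2/((j:ℝ)+1)^2)) (-Real.log (Real.sin (π*x)/(π*x))) := by
  have hb : ∀ j : ℕ, 0 ≤ x^2/((j:ℝ)+1)^2 ∧ x^2/((j:ℝ)+1)^2 < 1 := by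
    intro j
    refine ⟨by positivity, ?_⟩
    rw [div_lt_one (by positivity)]
    have : (0:ℝ) ≤ j := by positivity
    nlinarith
  rw [hasSum_iff_tendsto_nat_of_nonneg]
  · have h := Real.tendsto_euler_sin_prod x
    have hs : 0 < Real.sin (π*x) := Real.sin_pos_of_pos_of_lt_pi (by positivity) (by nlinarith [pi_pos])
    have h2 := (((h.div_const (π*x)).log (by positivity))).neg
    refine h2.congr fun n => ?_
    rw [mul_div_cancel_left₀ _ (by positivity), Real.log_prod, Finset.sum_neg_distrib]
    intro i _
    have := (hb i).2
    linarith
  · intro j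
    have := Real.log_nonpos (x := 1 - x^2/((j:ℝ)+1)^2) (by linarith [(hb j).2]) (by linarith [(hb j).1])
    linarith

lemma logsin2 (x : ℝ) (h0 : 0 < x) (h1 : x < 1) :
    HasSum (fun n : ℕ => (∑' k : ℕ, 1 / ((k : ℝ) + 1) ^ (2 * (n + 1))) / ((n:ℝ)+1) * x^(2*(n+1)))
      (-Real.log (Real.sin (π*x)/(π*x))) := by
  have hb : ∀ j : ℕ, 0 ≤ x^2/((j:ℝ)+1)^2 ∧ x^2/((j:ℝ)+1)^2 < 1 := by
    intro j
    refine ⟨by positivity, ?_⟩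
    rw [div_lt_one (by positivity)]
    have : (0:ℝ) ≤ j := by positivity
    nlinarith
  have hrow : ∀ j : ℕ, HasSum (fun n : ℕ => (x^2/((j:ℝ)+1)^2)^(n+1)/((n:ℝ)+1)) (-Real.log (1 - x^2/((j:ℝ)+1)^2)) := fun j =>
    Real.hasSum_pow_div_log_of_abs_lt_one (by rw [abs_of_nonneg (hb j).1]; exact (hb j).2)
  have hS : Summable (fun p : ℕ × ℕ => (x^2/((p.1:ℝ)+1)^2)^(p.2+1)/((p.2:ℝ)+1)) := by
    rw [summable_prod_of_nonneg]
    · refine ⟨fun j => (hrow j).summable, ?_⟩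
      simp_rw [fun j => (hrow j).tsum_eq]
      exact (logsin x h0 h1).summable
    · intro p
      have := (hb p.1).1
      simp only [Pi.zero_apply]
      positivity
  have hT := hS.hasSum
  have e1 := HasSum.prod_fiberwise hT hrow
  rw [(e1.unique (logsin x h0 h1))] at hT
  have hT2 := (Equiv.prodComm ℕ ℕ).hasSum_iff.mpr hT
  have hS2 := (Equiv.prodComm ℕ ℕ).summable_iff.mpr hS
  have := HasSum.prod_fiberwise hT2 (fun n => (hS2.prod_factor n).hasSum)
  convert! this using 2 with n
  rw [div_mul_eq_mul_div, mul_comm, ← tsum_mul_left, ← tsum_div_const]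
  congr 1; ext k
  simp only [Function.comp, Equiv.prodComm_apply, Prod.swap]
  rw [div_pow, ← pow_mul, ← pow_mul]
  ring

lemma cl_r (r θ : ℝ) (hr : 0 < r) (hr1 : r < 1) :
    ∑' k : ℕ, r^k * (Real.sin (k*θ)/(k:ℝ)^2) = ∫ t in (0:ℝ)..θ, -(Real.log (1-2*r*Real.cos t + r^2)/2) := by
  have hpt : ∀ t : ℝ, HasSum (fun k : ℕ => r^k * Real.cos (k*t) / k) (-(Real.log (1-2*r*Real.cos t + r^2)/2)) := by
    intro t
    set z : ℂ := r * Complex.exp (t * Complex.I) with hz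
    have hn : ‖z‖ < 1 := by
      rw [hz, norm_mul, Complex.norm_exp_ofReal_mul_I, Complex.norm_real, mul_one, norm_of_nonneg hr.le]; exact hr1
    have h := Complex.hasSum_re (Complex.hasSum_taylorSeries_neg_log hn)
    convert! h using 1
    · ext k
      have : z^k / (k:ℂ) = ((r^k/k : ℝ):ℂ) * Complex.exp (((k*t:ℝ):ℂ)*Complex.I) := by
        rw [hz, mul_pow, ← Complex.exp_nat_mul]
        push_cast
        rw [show (k:ℂ) * (t * Complex.I) = k * t * Complex.I by ring]
        ring
      rw [this, Complex.re_ofReal_mul, Complex.exp_ofReal_mul_I_re]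
      ring
    · rw [Complex.neg_re, Complex.log_re]
      congr 1
      rw [← Real.log_sqrt]
      · congr 1
        rw [Complex.norm_eq_sqrt_sq_add_sq]
        congr 1
        have e1 : (1-z).re = 1 - r * Real.cos t := by
          rw [Complex.sub_re, hz, Complex.re_ofReal_mul, Complex.exp_ofReal_mul_I_re]; simp
        have e2 : (1-z).im = - (r * Real.sin t) := by
          rw [Complex.sub_im, hz, Complex.im_ofReal_mul, Complex.exp_ofReal_mul_I_im]; simp
        rw [e1, e2]
        nlinarith [Real.sin_sq_add_cos_sq t]
      · nlinarith [Real.sin_sq_add_cos_sq t, sq_nonneg (1 - r*Real.cos t), sq_nonneg (r * Real.sin t)]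
  let f : ℕ → C(ℝ, ℝ) := fun k => ⟨fun t => r^k * Real.cos (k*t) / k, by fun_prop⟩
  have key := intervalIntegral.hasSum_intervalIntegral_of_summable_norm (a := 0) (b := θ) (f := f) (by
    refine Summable.of_nonneg_of_le (fun _ => norm_nonneg _) (fun k => ?_) (summable_geometric_of_lt_one hr.le hr1)
    rw [ContinuousMap.norm_le _ (by positivity)]
    intro t
    simp only [f, ContinuousMap.restrict_apply, ContinuousMap.coe_mk]
    rw [norm_div, norm_mul, norm_of_nonneg (by positivity : 0 ≤ r^k), Real.norm_natCast]
    rcases Nat.eq_zero_or_pos k with h | h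
    · subst h; simp
    · have h1 : (1:ℝ) ≤ k := by exact_mod_cast h
      rw [div_le_iff₀ (by positivity)]
      gcongr
      exact (Real.abs_cos_le_one _).trans h1)
  simp_rw [fun t => show ∑' i, f i t = _ from (hpt t).tsum_eq] at key
  rw [← key.tsum_eq]
  congr 1; ext k
  simp only [f, ContinuousMap.coe_mk]
  rcases Nat.eq_zero_or_pos k with h | h
  · subst h; simp
  · have h1 : (k:ℝ) ≠ 0 := by positivity
    rw [intervalIntegral.integral_div, intervalIntegral.integral_const_mul, intervalIntegral.integral_comp_mul_left (f := Real.cos) (hc := h1)]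
    simp
    field_simp

lemma cl_int (θ : ℝ) (h1 : 0 < θ) (h2 : θ < 2 * π) :
    ∑' k : ℕ, (Real.sin (k*θ)/(k:ℝ)^2) = ∫ t in (0:ℝ)..θ, -Real.log (2 * Real.sin (t/2)) := by
  have hs : ∀ t ∈ Set.uIoc 0 θ, 0 < Real.sin (t/2) := by
    intro t ht
    rw [Set.uIoc_of_le h1.le] at ht
    exact Real.sin_pos_of_pos_of_lt_pi (by linarith [ht.1]) (by linarith [ht.2])
  have hc : ∀ t, Real.cos t = 1 - 2 * Real.sin (t/2)^2 := by
    intro t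
    have := Real.cos_sq_add_sin_sq (t/2)
    have h := Real.cos_two_mul (t/2)
    rw [mul_div_cancel₀ _ (by norm_num)] at h
    linarith
  have A : Tendsto (fun r : ℝ => ∑' k : ℕ, r^k * (Real.sin (k*θ)/(k:ℝ)^2)) (𝓝[<] 1)
      (𝓝 (∑' k : ℕ, (Real.sin (k*θ)/(k:ℝ)^2))) := by
    apply tendsto_tsum_of_dominated_convergence (bound := fun k : ℕ => 1/(k:ℝ)^2)
    · exact Real.summable_one_div_nat_pow.mpr (by norm_num)
    · intro k
      have : Continuous (fun r : ℝ => r^k * (Real.sin (k*θ)/(k:ℝ)^2)) := by fun_prop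
      simpa using (this.tendsto 1).mono_left nhdsWithin_le_nhds
    · filter_upwards [Ioo_mem_nhdsLT (show (1/4:ℝ) < 1 by norm_num)] with r hr k
      have h0 : 0 ≤ r := by linarith [hr.1]
      rw [norm_mul, norm_div, norm_of_nonneg (by positivity : 0 ≤ r^k), norm_of_nonneg (by positivity : 0 ≤ (k:ℝ)^2)]
      have a1 := pow_le_one₀ h0 hr.2.le (n := k)
      have a2 : ‖Real.sin (k*θ)‖ ≤ 1 := Real.abs_sin_le_one _
      calc _ ≤ 1 * (1 / (k:ℝ)^2) := by gcongr
        _ = _ := one_mul _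
  have B : Tendsto (fun r : ℝ => ∫ t in (0:ℝ)..θ, -(Real.log (1-2*r*Real.cos t + r^2)/2)) (𝓝[<] 1)
      (𝓝 (∫ t in (0:ℝ)..θ, -Real.log (2 * Real.sin (t/2)))) := by
    apply intervalIntegral.tendsto_integral_filter_of_dominated_convergence
      (bound := fun t => Real.log 2 + ‖Real.log (Real.sin (t/2))‖)
    · refine Eventually.of_forall fun r => Measurable.aestronglyMeasurable ?_
      fun_prop
    · filter_upwards [Ioo_mem_nhdsLT (show (1/4:ℝ) < 1 by norm_num)] with r hr
      refine Eventually.of_forall fun t ht => ?_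
      have s0 := hs t ht
      have s1 := Real.sin_le_one (t/2)
      obtain ⟨hr0, hr1⟩ := hr
      have y1 : Real.sin (t/2)^2 ≤ 1-2*r*Real.cos t + r^2 := by
        rw [hc]; nlinarith [sq_nonneg (1-r), sq_nonneg (Real.sin (t/2))]
      have y2 : 1-2*r*Real.cos t + r^2 ≤ 2^2 := by
        nlinarith [Real.neg_one_le_cos t]
      have l1 := Real.log_le_log (by positivity) y1
      have l2 := Real.log_le_log (lt_of_lt_of_le (by positivity) y1) y2
      rw [Real.log_pow] at l1 l2
      push_cast at l1 l2
      have l3 := Real.log_nonpos s0.le s1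
      have l4 := Real.log_pos (show (1:ℝ) < 2 by norm_num)
      rw [Real.norm_eq_abs, Real.norm_eq_abs, abs_of_nonpos l3, abs_le]
      constructor <;> linarith
    · apply IntervalIntegrable.add intervalIntegrable_const
      apply IntervalIntegrable.norm
      have := (intervalIntegrable_log_sin (a := 0) (b := θ/2)).comp_mul_left (c := 1/2)
      simp only [Function.comp_def] at this
      convert! this using 2
      · ring_nf
      · simp
      · simp
    · refine Eventually.of_forall fun t ht => ?_
      have s0 := hs t ht
      have e : -Real.log (2 * Real.sin (t/2)) = -(Real.log (1-2*1*Real.cos t + 1^2)/2) := by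
        rw [hc, show 1-2*1*(1-2*Real.sin (t/2)^2) + 1^2 = (2 * Real.sin (t/2))^2 by ring, Real.log_pow]
        push_cast; ring
      rw [e]
      have : ContinuousAt (fun r : ℝ => -(Real.log (1-2*r*Real.cos t + r^2)/2)) 1 := by
        refine ContinuousAt.neg (ContinuousAt.div_const (ContinuousAt.log (by fun_prop) ?_) _)
        rw [hc, show 1-2*1*(1-2*Real.sin (t/2)^2) + 1^2 = (2 * Real.sin (t/2))^2 by ring]
        positivity
      exact this.tendsto.mono_left nhdsWithin_le_nhds
  refine tendsto_nhds_unique A (B.congr' ?_)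
  filter_upwards [Ioo_mem_nhdsLT (show (1/4:ℝ) < 1 by norm_num)] with r hr
  exact (cl_r r θ (by linarith [hr.1]) hr.2).symm

theorem stmt19 (θ : ℝ) (h1 : 0 < θ) (h2 : θ < 2 * π) :
    (∑' k : ℕ, Real.sin (((k : ℝ) + 1) * θ) / ((k : ℝ) + 1) ^ 2) / θ =
      1 - Real.log θ +
        ∑' n : ℕ, (∑' k : ℕ, 1 / ((k : ℝ) + 1) ^ (2 * (n + 1))) /
          (((n : ℝ) + 1) * (2 * (n : ℝ) + 3)) * (θ / (2 * π)) ^ (2 * (n + 1)) := by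
  have hp := pi_pos
  set Z : ℕ → ℝ := fun n => ∑' k : ℕ, 1 / ((k : ℝ) + 1) ^ (2 * (n + 1)) with hZ
  have hsum : ∀ n : ℕ, Summable (fun k : ℕ => 1 / ((k : ℝ) + 1) ^ (2 * (n + 1))) := by
    intro n
    have := (summable_nat_add_iff 1).mpr (Real.summable_one_div_nat_pow (p := 2*(n+1)) |>.mpr (by omega))
    simpa using this
  have hZ0 : ∀ n, 0 ≤ Z n := fun n => tsum_nonneg fun k => by positivity
  have hZle : ∀ n, Z n ≤ Z 0 := by
    intro n
    refine (hsum n).tsum_le_tsum (fun k => ?_) (hsum 0)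
    gcongr
    · simp
    · omega
  have hx0 : 0 ≤ θ/(2*π) := by positivity
  have hx1 : θ/(2*π) < 1 := by rw [div_lt_one (by positivity)]; exact h2
  let f : ℕ → C(ℝ, ℝ) := fun n => ⟨fun t => Z n / ((n:ℝ)+1) * (t/(2*π))^(2*(n+1)), by fun_prop⟩
  have hbd : ∀ n : ℕ, ∀ t ∈ Set.Icc 0 θ, ‖f n t‖ ≤ Z 0 * (θ/(2*π))^n := by
    intro n t ht'
    have hz := hZ0 0
    simp only [f, ContinuousMap.coe_mk]
    have hzn := hZ0 n
    have ht0 := ht'.1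
    rw [norm_of_nonneg (by positivity)]
    have b1 : Z n / ((n:ℝ)+1) ≤ Z 0 := (div_le_self hzn (by simp)).trans (hZle n)
    have b2 : (t/(2*π))^(2*(n+1)) ≤ (θ/(2*π))^n := by
      calc _ ≤ (θ/(2*π))^(2*(n+1)) := by gcongr; exact ht'.2
        _ ≤ _ := pow_le_pow_of_le_one hx0 hx1.le (by omega)
    exact mul_le_mul b1 b2 (by positivity) hz
  have hgeo := (summable_geometric_of_lt_one hx0 hx1).mul_left (Z 0)
  have key := intervalIntegral.hasSum_intervalIntegral_of_summable_norm (a := 0) (b := θ) (f := f) (by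
    refine Summable.of_nonneg_of_le (fun _ => norm_nonneg _) (fun n => ?_) hgeo
    have hz := hZ0 0
    rw [ContinuousMap.norm_le _ (by positivity)]
    rintro ⟨t, ht⟩
    have ht' : t ∈ Set.Icc 0 θ := by simpa [Set.uIcc_of_le h1.le] using ht
    exact hbd n t ht')
  have hI : ∫ t in (0:ℝ)..θ, -Real.log (2 * Real.sin (t/2)) = ∫ t in (0:ℝ)..θ, (-Real.log t + ∑' n, f n t) := by
    apply intervalIntegral.integral_congr_ae
    refine Eventually.of_forall fun t ht => ?_
    rw [Set.uIoc_of_le h1.le] at ht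
    have t0 := ht.1
    have := (logsin2 (t/(2*π)) (by positivity) (by rw [div_lt_one (by positivity)]; linarith [ht.2])).tsum_eq
    have e : ∑' n, f n t = _ := this
    rw [e, show π * (t/(2*π)) = t/2 by field_simp]
    have s0 : 0 < Real.sin (t/2) := Real.sin_pos_of_pos_of_lt_pi (by linarith) (by linarith [ht.2])
    rw [Real.log_div s0.ne' (by positivity), Real.log_div t0.ne' (by norm_num), Real.log_mul (by norm_num) s0.ne']
    ring
  have hlogint : IntervalIntegrable (fun t => -Real.log t) MeasureTheory.volume 0 θ :=
    intervalIntegral.intervalIntegrable_log'.neg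
  have hfint : IntervalIntegrable (fun t => ∑' n, f n t) MeasureTheory.volume 0 θ := by
    apply ContinuousOn.intervalIntegrable
    rw [Set.uIcc_of_le h1.le]
    exact continuousOn_tsum (fun n => (f n).continuous.continuousOn) hgeo hbd
  have hL : ∑' k : ℕ, Real.sin (((k : ℝ) + 1) * θ) / ((k : ℝ) + 1) ^ 2 = ∑' k : ℕ, (Real.sin (k*θ)/(k:ℝ)^2) := by
    rw [Summable.tsum_eq_zero_add (f := fun k : ℕ => (Real.sin (k*θ)/(k:ℝ)^2))]
    · simp
    · refine Summable.of_norm_bounded (Real.summable_one_div_nat_pow (p := 2) |>.mpr (by omega)) fun k => ?_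
      rw [norm_div, norm_of_nonneg (by positivity : 0 ≤ (k:ℝ)^2)]
      gcongr
      exact Real.abs_sin_le_one _
  rw [hL, cl_int θ h1 h2, hI, intervalIntegral.integral_add hlogint hfint, ← key.tsum_eq,
    intervalIntegral.integral_neg, integral_log, add_div, ← tsum_div_const]
  congr 1
  · simp; field_simp
  · congr 1; ext n
    simp only [f, ContinuousMap.coe_mk]
    rw [intervalIntegral.integral_const_mul, intervalIntegral.integral_comp_div (fun x => x^(2*(n+1))) (by positivity), integral_pow]
    change _ = Z n / _ * _
    generalize Z n = z
    have hth : θ = (θ/(2*π)) * (2*π) := by field_simp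
    have hxp : 0 < θ/(2*π) := by positivity
    generalize θ/(2*π) = x at hth hxp
    subst hth
    rw [zero_div, zero_pow (by omega), pow_succ]
    push_cast
    simp only [smul_eq_mul]
    have : (2 * ((n:ℝ)+1) + 1) = 2 * n + 3 := by ring
    rw [this]
    field_simp
    ring
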